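/- There exists a polynomial Q with natural-number coefficients such that for every 2-VASS V with n control states and norm M, every run ρ of V whose control states all lie within a single strongly connected component and which satisfies ‖trg(ρ)‖ > Q(nM)·(‖src(ρ)‖ + 1) contains a configuration that enables a semi-positive cycle of length at most Q(nM). -/

import Mathlib

/-- Integer vectors in the plane. -/
abbrev Vec2 : Type := ℤ × ℤ

/-- The norm of a vector: the maximum of the absolute values of its coordinates. -/
def vnorm (v : Vec2) : ℕ := max v.1.natAbs v.2.natAbs

/-- A vector is positive if both coordinates are positive. -/
def Pos (v : Vec2) : Prop := 0 < v.1 ∧ 0 < v.2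

/-- A vector is semi-positive if both coordinates are nonnegative and one is positive. -/
def SemiPos (v : Vec2) : Prop := 0 ≤ v.1 ∧ 0 ≤ v.2 ∧ (0 < v.1 ∨ 0 < v.2)

/-- A vector is vertical if it is of the form (0, a) with a > 0. -/
def Vert (v : Vec2) : Prop := v.1 = 0 ∧ 0 < v.2

/-- A vector is horizontal if it is of the form (a, 0) with a > 0. -/
def Horiz (v : Vec2) : Prop := 0 < v.1 ∧ v.2 = 0

/-- Embedding of integer vectors into the rational plane. -/
def toQ (v : Vec2) : ℚ × ℚ := ((v.1 : ℚ), (v.2 : ℚ))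

/-- The half-line (ray) ℚ≥0 · x generated by a rational vector x. -/
def rayQ (x : ℚ × ℚ) : Set (ℚ × ℚ) := {z | ∃ a : ℚ, 0 ≤ a ∧ z = a • x}

/-- The cone of a finite list of integer vectors: all nonnegative rational
linear combinations. -/
def Cone (vs : List Vec2) : Set (ℚ × ℚ) :=
  {x | ∃ a : Fin vs.length → ℚ, (∀ i, 0 ≤ a i) ∧ x = ∑ i, a i • toQ (vs.get i)}

/-- The sequential cone: nonnegative rational combinations all of whose
partial sums are in the nonnegative orthant. -/
def SeqCone (vs : List Vec2) : Set (ℚ × ℚ) :=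
  {x | ∃ a : Fin vs.length → ℚ, (∀ i, 0 ≤ a i) ∧
    (∀ k : ℕ, k ≤ vs.length →
      0 ≤ ∑ i : Fin vs.length, if (i : ℕ) < k then a i • toQ (vs.get i) else 0) ∧
    x = ∑ i, a i • toQ (vs.get i)}

/-- Two integer vectors are colinear if they generate the same half-line. -/
def Colinear (v w : Vec2) : Prop := rayQ (toQ v) = rayQ (toQ w)

/-- The clockwise relation on nonnegative vectors:
`Clk v u` iff u lies strictly clockwise from v. -/
def Clk (v u : Vec2) : Prop := 0 < v.2 * u.1 - v.1 * u.2

/-- Projection of a vector on coordinate `j` (`Fin 2` indexes the two coordinates). -/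
def proj (j : Fin 2) (v : Vec2) : ℤ := if j = 0 then v.1 else v.2

/-! ### 2-dimensional vector addition systems with states (2-VASS) -/

/-- A transition of a 2-VASS with control states `Fin n`:
a source state, an effect vector, and a target state. -/
abbrev Transition (n : ℕ) : Type := Fin n × Vec2 × Fin n

/-- A 2-VASS with control states `Fin n` is a finite set of transitions. -/
abbrev VASS (n : ℕ) : Type := Finset (Transition n)

/-- The norm of a 2-VASS: the largest norm of an effect of a transition. -/
def vassNorm {n : ℕ} (V : VASS n) : ℕ := V.sup (fun t => vnorm t.2.1)

/-- The effect of a sequence of transitions: the sum of the individual effects. -/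
def effect {n : ℕ} (π : List (Transition n)) : Vec2 := (π.map (fun t => t.2.1)).sum

/-- A path of `V`: a sequence of transitions of `V` in which
consecutive control states match. -/
def IsPath {n : ℕ} (V : VASS n) (π : List (Transition n)) : Prop :=
  (∀ t ∈ π, t ∈ V) ∧ π.Chain' (fun s t => s.2.2 = t.1)

/-- The path `π` starts at control state `q` (vacuously true for the empty path). -/
def startsAt {n : ℕ} (π : List (Transition n)) (q : Fin n) : Prop :=
  ∀ t ∈ π.head?, t.1 = q

/-- The control state after the first `i` transitions of `π`, for a path
starting at control state `q`. -/
def stateAt {n : ℕ} (π : List (Transition n)) (q : Fin n) (i : ℕ) : Fin n :=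
  (((π.take i).getLast?).map (fun t => t.2.2)).getD q

/-- The final control state of a path `π` starting at control state `q`. -/
def endState {n : ℕ} (π : List (Transition n)) (q : Fin n) : Fin n := stateAt π q π.length

/-- The counter values after the first `i` transitions of `π`, starting from
counter values `u`. -/
def vecAt {n : ℕ} (π : List (Transition n)) (u : Vec2) (i : ℕ) : Vec2 :=
  u + effect (π.take i)

/-- The path `π` is enabled in the configuration `(q, u)`: it starts at `q`
and all intermediate counter values are nonnegative. -/
def Enabled {n : ℕ} (π : List (Transition n)) (q : Fin n) (u : Vec2) : Prop :=
  startsAt π q ∧ ∀ i ≤ π.length, 0 ≤ vecAt π u i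

/-- For `j ∈ {1,2}`, the path `π` is `{j}`-enabled in the configuration `(q, u)`:
it starts at `q` and the `j`-th coordinate of all intermediate counter values is
nonnegative. -/
def JEnabled {n : ℕ} (π : List (Transition n)) (q : Fin n) (u : Vec2) (j : Fin 2) : Prop :=
  startsAt π q ∧ ∀ i ≤ π.length, 0 ≤ proj j (vecAt π u i)

/-- A run of `V`: a path of `V` enabled in the configuration `(q, u)`.
Its source is `(q, u)`, its target is `(endState π q, vecAt π u π.length)`,
and its configurations are `(stateAt π q i, vecAt π u i)` for `i ≤ π.length`. -/
def IsRun {n : ℕ} (V : VASS n) (π : List (Transition n)) (q : Fin n) (u : Vec2) : Prop :=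
  IsPath V π ∧ Enabled π q u

/-- A (0,0)-run of `V`: a run whose source and target counter values are `(0,0)`. -/
def IsZeroRun {n : ℕ} (V : VASS n) (π : List (Transition n)) (q : Fin n) : Prop :=
  IsRun V π q 0 ∧ effect π = 0

/-- A cycle of `V`: a nonempty path of `V` whose starting and ending control
states coincide. -/
def IsCycle {n : ℕ} (V : VASS n) (γ : List (Transition n)) : Prop :=
  IsPath V γ ∧ γ ≠ [] ∧ γ.head?.map (fun t => t.1) = γ.getLast?.map (fun t => t.2.2)

/-- Reachability in the directed graph of `V`: there is a path of `V`
from `p` to `q` (possibly empty). -/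
def Reach {n : ℕ} (V : VASS n) (p q : Fin n) : Prop :=
  ∃ π : List (Transition n), IsPath V π ∧ startsAt π p ∧ endState π p = q

/-- `S` is a strongly connected component of the directed graph of `V`:
it is nonempty, all its states are mutually reachable, and it is maximal
with this property. -/
def IsSCC {n : ℕ} (V : VASS n) (S : Set (Fin n)) : Prop :=
  S.Nonempty ∧ (∀ p ∈ S, ∀ q ∈ S, Reach V p q) ∧
  (∀ p ∈ S, ∀ q : Fin n, Reach V p q → Reach V q p → q ∈ S)

/-- All control states occurring in the sequence of transitions `γ` belong to `S`. -/
def WithinS {n : ℕ} (S : Set (Fin n)) (γ : List (Transition n)) : Prop :=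
  ∀ t ∈ γ, t.1 ∈ S ∧ t.2.2 ∈ S

/-- `l` is a list of edges forming a walk from `p` to `q`, where the edge `e` leads from
`src e` to `tgt e`. -/
def EdgeWalk {T K : Type*} (src tgt : T → K) : K → List T → K → Prop
  | p, [], q => p = q
  | p, e :: l, q => src e = p ∧ EdgeWalk src tgt (tgt e) l q

namespace EdgeWalk

variable {T K : Type*} {src tgt : T → K}

theorem append_iff {p q : K} {a b : List T} :
    EdgeWalk src tgt p (a ++ b) q ↔ ∃ r, EdgeWalk src tgt p a r ∧ EdgeWalk src tgt r b q := by
  induction a generalizing p with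
  | nil => simp [EdgeWalk]
  | cons e l ih => simp [EdgeWalk, ih, and_assoc]

theorem append {p q r : K} {a b : List T} (ha : EdgeWalk src tgt p a r)
    (hb : EdgeWalk src tgt r b q) : EdgeWalk src tgt p (a ++ b) q :=
  append_iff.2 ⟨r, ha, hb⟩

theorem iterate {p : K} {a : List T} (ha : EdgeWalk src tgt p a p) (k : ℕ) :
    EdgeWalk src tgt p (List.replicate k a).flatten p := by
  induction k with
  | zero => simp [EdgeWalk]
  | succ k ih => simpa [List.replicate_succ] using ha.append ih

theorem map {T' K' : Type*} {src' tgt' : T' → K'} (g : T → T') (φ : K → K') {l : List T}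
    (hs : ∀ e ∈ l, src' (g e) = φ (src e)) (ht : ∀ e ∈ l, tgt' (g e) = φ (tgt e)) {p q : K}
    (h : EdgeWalk src tgt p l q) : EdgeWalk src' tgt' (φ p) (l.map g) (φ q) := by
  induction l generalizing p with
  | nil => simpa [EdgeWalk] using congrArg φ h
  | cons e l ih =>
    refine ⟨by rw [hs e (by simp), h.1], ?_⟩
    rw [ht e (by simp)]
    exact ih (fun e he => hs e (by simp [he])) (fun e he => ht e (by simp [he])) h.2

/-- A closed walk may be started at the vertex where the partial sums of a weight of total `0`
are minimal. -/
theorem exists_rotation {p : K} {c : List T} (hc : EdgeWalk src tgt p c p)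
    (w : T → ℤ) (h0 : (c.map w).sum = 0) :
    ∃ (r : K) (d : List T), EdgeWalk src tgt r d r ∧ d.Perm c ∧
      ∀ j, 0 ≤ ((d.take j).map w).sum := by
  obtain ⟨i, -, hmin⟩ := Finset.exists_min_image (Finset.range (c.length + 1))
    (fun i => ((c.take i).map w).sum) ⟨0, by simp⟩
  have hmin' : ∀ j, ((c.take i).map w).sum ≤ ((c.take j).map w).sum := by
    intro j
    by_cases hj : j ≤ c.length
    · exact hmin j (by simp; omega)
    · rw [List.take_of_length_le (i := j) (by omega)]
      simpa using hmin c.length (by simp)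
  rw [← List.take_append_drop i c, append_iff] at hc
  obtain ⟨r, h1, h2⟩ := hc
  refine ⟨r, c.drop i ++ c.take i, h2.append h1, ?_, ?_⟩
  · calc (c.drop i ++ c.take i).Perm (c.take i ++ c.drop i) := List.perm_append_comm
      _ = c := List.take_append_drop i c
  · intro j
    have hsplit : ((c.take i).map w).sum + ((c.drop i).map w).sum = 0 := by
      rw [← List.sum_append, ← List.map_append, List.take_append_drop, h0]
    rw [List.take_append, List.map_append, List.sum_append, List.take_take]
    by_cases hj : j ≤ (c.drop i).length
    · have h3 := hmin' (i + j)
      rw [List.take_add, List.map_append, List.sum_append] at h3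
      simp only [Nat.sub_eq_zero_of_le hj, Nat.zero_min, List.take_zero, List.map_nil,
        List.sum_nil]
      omega
    · rw [List.take_of_length_le (i := j) (by omega)]
      have h3 := hmin' (min (j - (c.drop i).length) i)
      omega

/-- A walk with more edges than there are vertices contains a short closed walk. -/
theorem exists_closed_infix [DecidableEq K] {p q : K} {l : List T} (h : EdgeWalk src tgt p l q)
    (F : Finset K) (hF : ∀ e ∈ l, src e ∈ F) (hlen : F.card < l.length) :
    ∃ (a c b : List T) (r : K), l = a ++ c ++ b ∧ c ≠ [] ∧ c.length ≤ F.card ∧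
      EdgeWalk src tgt p a r ∧ EdgeWalk src tgt r c r ∧ EdgeWalk src tgt r b q := by
  obtain ⟨i, hi, j, hj, hij, hsrc⟩ : ∃ i, ∃ (_ : i < l.length), ∃ j, ∃ (_ : j < F.card + 1),
      i < j ∧ ∀ (hj : j < l.length), src l[i] = src l[j] := by
    have hcard : F.card < (Finset.univ : Finset (Fin (F.card + 1))).card := by simp
    obtain ⟨i, -, j, -, hne, heq⟩ := Finset.exists_ne_map_eq_of_card_lt_of_maps_to hcard
      (f := fun i : Fin (F.card + 1) => src (l[(i : ℕ)]'(by omega)))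
      (fun i _ => hF _ (List.getElem_mem _))
    rcases lt_or_gt_of_ne hne with hlt | hlt
    · exact ⟨i, by omega, j, j.2, hlt, fun _ => heq⟩
    · exact ⟨j, by omega, i, i.2, hlt, fun _ => heq.symm⟩
  have hjl : j < l.length := by omega
  have hstart : ∀ k (hk : k < l.length) r, EdgeWalk src tgt r (l.drop k) q → src l[k] = r := by
    intro k hk r hr
    rw [List.drop_eq_getElem_cons hk] at hr
    exact hr.1
  have h1 := h
  rw [← List.take_append_drop i l, append_iff] at h1
  obtain ⟨r, ha, hr⟩ := h1
  have hri := hstart i hi r hr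
  rw [← List.take_append_drop (j - i) (l.drop i), append_iff] at hr
  obtain ⟨r', hc, hb⟩ := hr
  rw [List.drop_drop, Nat.add_sub_cancel' hij.le] at hb
  have hrj := hstart j hjl r' hb
  have hrr : r = r' := by rw [← hri, ← hrj, hsrc hjl]
  subst hrr
  refine ⟨l.take i, (l.drop i).take (j - i), l.drop j, r, ?_, ?_, ?_, ha, hc, hb⟩
  · have : l.drop j = (l.drop i).drop (j - i) := by
      rw [List.drop_drop, Nat.add_sub_cancel' hij.le]
    rw [this, List.append_assoc, List.take_append_drop, List.take_append_drop]
  · rw [← List.length_pos_iff]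
    simp
    omega
  · simp
    omega

/-- Short walks between connected vertices. -/
theorem exists_short [DecidableEq K] {p q : K} {l : List T} (h : EdgeWalk src tgt p l q)
    (F : Finset K) (hF : ∀ e ∈ l, src e ∈ F) :
    ∃ l', EdgeWalk src tgt p l' q ∧ l'.length ≤ F.card ∧ ∀ e ∈ l', e ∈ l := by
  induction hm : l.length using Nat.strong_induction_on generalizing l with
  | _ m ih =>
    by_cases hlen : F.card < l.length
    · obtain ⟨a, c, b, r, rfl, hne, -, ha, -, hb⟩ := h.exists_closed_infix F hF hlen
      have hpos := List.length_pos_iff.2 hne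
      obtain ⟨l', h1, h2, h3⟩ := ih (a ++ b).length
        (by simp only [List.length_append] at hm ⊢; omega) (ha.append hb)
        (fun e he => hF e (by simp at he ⊢; tauto)) rfl
      exact ⟨l', h1, h2, fun e he => by have := h3 e he; simp at this ⊢; tauto⟩
    · exact ⟨l, h, by omega, fun _ he => he⟩

/-- A walk of large weight uses the edges of a short closed walk of positive weight. -/
theorem exists_pos_closed [DecidableEq K] {p q : K} {l : List T} (h : EdgeWalk src tgt p l q)
    (F : Finset K) (hF : ∀ e ∈ l, src e ∈ F) (w : T → ℤ) (W : ℕ) (hW : ∀ e ∈ l, w e ≤ W)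
    (hsum : (F.card * W : ℤ) < (l.map w).sum) :
    ∃ (r : K) (c : List T), EdgeWalk src tgt r c r ∧ c ≠ [] ∧ c.length ≤ F.card ∧
      (∀ e ∈ c, e ∈ l) ∧ 0 < (c.map w).sum := by
  induction hm : l.length using Nat.strong_induction_on generalizing l with
  | _ m ih =>
    by_cases hlen : F.card < l.length
    · obtain ⟨a, c, b, r, rfl, hne, hcl, ha, hc, hb⟩ := h.exists_closed_infix F hF hlen
      by_cases hpos : 0 < (c.map w).sum
      · exact ⟨r, c, hc, hne, hcl, fun e he => by simp [he], hpos⟩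
      have hlpos := List.length_pos_iff.2 hne
      obtain ⟨r', c', h1, h2, h3, h4, h5⟩ := ih (a ++ b).length
        (by simp only [List.length_append] at hm ⊢; omega) (ha.append hb)
        (fun e he => hF e (by simp at he ⊢; tauto))
        (fun e he => hW e (by simp at he ⊢; tauto))
        (by simp only [List.map_append, List.sum_append] at hsum ⊢; omega) rfl
      exact ⟨r', c', h1, h2, h3, fun e he => by have := h4 e he; simp at this ⊢; tauto, h5⟩
    · exfalso
      have h1 : (l.map w).sum ≤ (l.map w).length • (W : ℤ) :=
        List.sum_le_card_nsmul _ _ (by simpa using hW)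
      have h2 : ((l.length * W : ℕ) : ℤ) ≤ (F.card * W : ℕ) := by
        exact_mod_cast Nat.mul_le_mul_right W (by omega)
      push_cast at h2
      simp at h1
      omega

end EdgeWalk

/-- A sequence with steps at most `M` that ends above `B` stays above `B` from some moment on at
which its value is still small. -/
theorem exists_last_below (f : ℕ → ℤ) (M B : ℤ) (m : ℕ)
    (hf : ∀ i < m, f (i + 1) ≤ f i + M) (hm : B ≤ f m) :
    ∃ k ≤ m, f k ≤ max (f 0) (B + M) ∧ ∀ i, k ≤ i → i ≤ m → B ≤ f i := by
  induction m with
  | zero =>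
    refine ⟨0, le_rfl, le_max_left _ _, fun i _ hi => ?_⟩
    obtain rfl : i = 0 := by omega
    exact hm
  | succ m ih =>
    by_cases h : B ≤ f m
    · obtain ⟨k, hk, h1, h2⟩ := ih (fun i hi => hf i (by omega)) h
      refine ⟨k, by omega, h1, fun i hki hi => ?_⟩
      rcases Nat.lt_or_ge i (m + 1) with hlt | hge
      · exact h2 i hki (by omega)
      · obtain rfl : i = m + 1 := by omega
        exact hm
    · refine ⟨m + 1, le_rfl, ?_, fun i hki hi => ?_⟩
      · have := hf m (by omega)
        exact le_max_of_le_right (by omega)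
      · obtain rfl : i = m + 1 := by omega
        exact hm

/-- Walks in the directed graph of a 2-VASS. -/
abbrev TWalk {n : ℕ} (p : Fin n) (l : List (Transition n)) (q : Fin n) : Prop :=
  EdgeWalk (fun t : Transition n => t.1) (fun t : Transition n => t.2.2) p l q

theorem TWalk.of_isPath {n : ℕ} {V : VASS n} {π : List (Transition n)} {q : Fin n}
    (hp : IsPath V π) (hs : startsAt π q) : TWalk q π (endState π q) := by
  obtain ⟨-, hp⟩ := hp
  induction π generalizing q with
  | nil => simp [EdgeWalk, endState, stateAt]
  | cons t l ih =>
    refine ⟨hs t (by simp), ?_⟩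
    have h1 := ih (q := t.2.2) (by
      intro s hs
      cases l with
      | nil => simp at hs
      | cons a l =>
        simp at hs
        subst hs
        exact ((List.isChain_cons_cons.1 hp).1).symm) hp.tail
    convert h1 using 1
    cases l with
    | nil => simp [endState, stateAt]
    | cons a l => simp [endState, stateAt, List.getLast?_cons]

theorem TWalk.stateAt_eq {n : ℕ} {l : List (Transition n)} {p q : Fin n} (h : TWalk p l q) :
    (l.getLast?.map (fun t => t.2.2)).getD p = q := by
  induction l generalizing p with
  | nil => exact h
  | cons t l ih =>
    have := ih h.2
    cases l with
    | nil => simpa using this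
    | cons a l => simpa [List.getLast?_cons] using this

theorem TWalk.isPath {n : ℕ} {V : VASS n} {l : List (Transition n)} {p q : Fin n}
    (h : TWalk p l q) (hV : ∀ t ∈ l, t ∈ V) : IsPath V l := by
  refine ⟨hV, ?_⟩
  clear hV
  induction l generalizing p with
  | nil => exact List.isChain_nil
  | cons t l ih =>
    cases l with
    | nil => exact List.isChain_singleton _
    | cons a l => exact List.isChain_cons_cons.2 ⟨h.2.1.symm, ih h.2⟩

theorem TWalk.startsAt {n : ℕ} {l : List (Transition n)} {p q : Fin n}
    (h : TWalk p l q) : startsAt l p := by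
  cases l with
  | nil => intro t ht; simp at ht
  | cons a l =>
    intro t ht
    simp at ht
    subst ht
    exact h.1

theorem TWalk.isCycle {n : ℕ} {V : VASS n} {l : List (Transition n)} {p : Fin n}
    (h : TWalk p l p) (hne : l ≠ []) (hV : ∀ t ∈ l, t ∈ V) : IsCycle V l := by
  refine ⟨h.isPath hV, hne, ?_⟩
  have h1 := h.stateAt_eq
  cases l with
  | nil => exact absurd rfl hne
  | cons a l =>
    have h2 : a.1 = p := h.1
    simp [List.getLast?_cons] at h1 ⊢
    rw [h1, h2]

theorem TWalk.take_drop {n : ℕ} {l : List (Transition n)} {p q : Fin n} (h : TWalk p l q)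
    (i : ℕ) : TWalk p (l.take i) (stateAt l p i) ∧ TWalk (stateAt l p i) (l.drop i) q := by
  have h0 : TWalk p (l.take i ++ l.drop i) q := by rwa [List.take_append_drop]
  obtain ⟨r, h1, h2⟩ := EdgeWalk.append_iff.1 h0
  have : stateAt l p i = r := TWalk.stateAt_eq h1
  exact this ▸ ⟨h1, h2⟩

theorem TWalk.stateAt_getElem {n : ℕ} {l : List (Transition n)} {p q : Fin n}
    (h : TWalk p l q) (i : ℕ) (hi : i < l.length) :
    stateAt l p i = l[i].1 ∧ stateAt l p (i + 1) = l[i].2.2 := by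
  have h1 := (h.take_drop i).2
  rw [List.drop_eq_getElem_cons hi] at h1
  refine ⟨h1.1.symm, ?_⟩
  have h2 := (h.take_drop i).1
  have h3 : TWalk p (l.take i ++ [l[i]]) l[i].2.2 := h2.append ⟨h1.1, rfl⟩
  rw [List.take_append_getElem] at h3
  exact TWalk.stateAt_eq h3

/-- The two ways of naming the coordinates of a vector. -/
def IsCoordPair (a b : Vec2 →+ ℤ) : Prop :=
  (a = AddMonoidHom.fst ℤ ℤ ∧ b = AddMonoidHom.snd ℤ ℤ) ∨
    (a = AddMonoidHom.snd ℤ ℤ ∧ b = AddMonoidHom.fst ℤ ℤ)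

namespace IsCoordPair

variable {a b : Vec2 →+ ℤ}

theorem symm (h : IsCoordPair a b) : IsCoordPair b a := by
  unfold IsCoordPair at *
  tauto

theorem nonneg_iff (h : IsCoordPair a b) (v : Vec2) : 0 ≤ v ↔ 0 ≤ a v ∧ 0 ≤ b v := by
  rcases h with ⟨rfl, rfl⟩ | ⟨rfl, rfl⟩ <;> simp [Prod.le_def, and_comm]

theorem abs_le (h : IsCoordPair a b) (v : Vec2) : |a v| ≤ vnorm v := by
  rcases h with ⟨rfl, rfl⟩ | ⟨rfl, rfl⟩ <;> simp [vnorm]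

theorem vnorm_eq (h : IsCoordPair a b) {v : Vec2} (hv : 0 ≤ v) :
    (vnorm v : ℤ) = max (a v) (b v) := by
  have h1 := hv.1
  have h2 := hv.2
  simp at h1 h2
  rcases h with ⟨rfl, rfl⟩ | ⟨rfl, rfl⟩ <;>
    simp [vnorm, abs_of_nonneg h1, abs_of_nonneg h2, max_comm]

theorem semiPos (h : IsCoordPair a b) {v : Vec2} (ha : 0 < a v) (hb : 0 ≤ b v) : SemiPos v := by
  rcases h with ⟨rfl, rfl⟩ | ⟨rfl, rfl⟩ <;> simp at ha hb <;> refine ⟨?_, ?_, ?_⟩ <;> omega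

end IsCoordPair

theorem map_effect {n : ℕ} (a : Vec2 →+ ℤ) (l : List (Transition n)) :
    a (effect l) = (l.map (fun t => a t.2.1)).sum := by
  simp [effect, map_list_sum, Function.comp_def]

theorem effect_append {n : ℕ} (k l : List (Transition n)) :
    effect (k ++ l) = effect k + effect l := by
  simp [effect]

theorem effect_iterate {n : ℕ} (k : ℕ) (l : List (Transition n)) :
    effect (List.replicate k l).flatten = k • effect l := by
  induction k with
  | zero => simp [effect]
  | succ k ih => rw [List.replicate_succ, List.flatten_cons, effect_append, ih, succ_nsmul']

theorem vnorm_le_vassNorm {n : ℕ} {V : VASS n} {t : Transition n} (ht : t ∈ V) :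
    vnorm t.2.1 ≤ vassNorm V :=
  Finset.le_sup (f := fun t : Transition n => vnorm t.2.1) ht

theorem abs_effect_le {n : ℕ} {V : VASS n} {l : List (Transition n)} (hl : ∀ t ∈ l, t ∈ V)
    {a b : Vec2 →+ ℤ} (hab : IsCoordPair a b) : |a (effect l)| ≤ l.length * vassNorm V := by
  induction l with
  | nil => simp [effect]
  | cons t l ih =>
    have h1 := ih (fun s hs => hl s (by simp [hs]))
    have h2 : |a t.2.1| ≤ vassNorm V :=
      (hab.abs_le _).trans (by exact_mod_cast vnorm_le_vassNorm (hl t (by simp)))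
    have h3 : effect (t :: l) = t.2.1 + effect l := by simp [effect]
    rw [h3, map_add]
    refine (abs_add_le _ _).trans ?_
    push_cast [List.length_cons]
    linarith

theorem abs_effect_le_of_length_le {n : ℕ} {V : VASS n} {l : List (Transition n)}
    (hl : ∀ t ∈ l, t ∈ V) {a b : Vec2 →+ ℤ} (hab : IsCoordPair a b) {k : ℕ}
    (hk : l.length ≤ k) : |a (effect l)| ≤ k * vassNorm V :=
  (abs_effect_le hl hab).trans
    (by exact_mod_cast Nat.mul_le_mul_right _ hk)

theorem vecAt_succ {n : ℕ} {π : List (Transition n)} (u : Vec2) {i : ℕ} (hi : i < π.length) :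
    vecAt π u (i + 1) = vecAt π u i + π[i].2.1 := by
  simp only [vecAt]
  rw [← List.take_append_getElem hi, effect_append, add_assoc]
  simp [effect]

theorem vecAt_length {n : ℕ} (π : List (Transition n)) (u : Vec2) (i : ℕ) :
    vecAt π u π.length = vecAt π u i + effect (π.drop i) := by
  simp only [vecAt]
  rw [List.take_length, add_assoc, ← effect_append, List.take_append_drop]

/-- Some configuration of the run of `π` from `(q, u)` enables a semi-positive cycle of length at
most `L`. -/
def EnablesCycle {n : ℕ} (V : VASS n) (π : List (Transition n)) (q : Fin n) (u : Vec2)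
    (L : ℕ) : Prop :=
  ∃ i ≤ π.length, ∃ γ : List (Transition n),
    IsCycle V γ ∧ Enabled γ (stateAt π q i) (vecAt π u i) ∧ SemiPos (effect γ) ∧ γ.length ≤ L

theorem EnablesCycle.intro {n : ℕ} {V : VASS n} {π : List (Transition n)} {q : Fin n} {u : Vec2}
    {L i : ℕ} (hi : i ≤ π.length) {γ : List (Transition n)}
    (hγ : TWalk (stateAt π q i) γ (stateAt π q i)) (hV : ∀ t ∈ γ, t ∈ V) {a b : Vec2 →+ ℤ}
    (hab : IsCoordPair a b) (ha : L * vassNorm V ≤ a (vecAt π u i))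
    (hb : ∀ j, 0 ≤ b (vecAt π u i) + b (effect (γ.take j)))
    (hapos : 0 < a (effect γ)) (hbpos : 0 ≤ b (effect γ)) (hL : γ.length ≤ L) :
    EnablesCycle V π q u L := by
  have hne : γ ≠ [] := by
    rintro rfl
    simp [effect] at hapos
  refine ⟨i, hi, γ, hγ.isCycle hne hV, ⟨hγ.startsAt, fun j _ => ?_⟩,
    hab.semiPos hapos hbpos, hL⟩
  rw [hab.nonneg_iff, vecAt, map_add, map_add]
  refine ⟨?_, hb j⟩
  have h1 := abs_le.1 (abs_effect_le_of_length_le (V := V) (l := γ.take j)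
    (fun t ht => hV t (List.mem_of_mem_take ht)) hab (k := L) (by simp; omega))
  linarith [h1.1]

theorem EnablesCycle.mono {n : ℕ} {V : VASS n} {π : List (Transition n)} {q : Fin n} {u : Vec2}
    {L L' : ℕ} (h : EnablesCycle V π q u L) (hL : L ≤ L') : EnablesCycle V π q u L' := by
  obtain ⟨i, hi, γ, h1, h2, h3, h4⟩ := h
  exact ⟨i, hi, γ, h1, h2, h3, h4.trans hL⟩

/-- Effects of closed walks of length at most `n` that only use transitions of `π`. -/
def shortEffects {n : ℕ} (π : List (Transition n)) : Set Vec2 :=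
  {v | ∃ (r : Fin n) (c : List (Transition n)), TWalk r c r ∧ c ≠ [] ∧ c.length ≤ n ∧
    (∀ t ∈ c, t ∈ π) ∧ effect c = v}

theorem TWalk.exists_pos_closed {n : ℕ} {l : List (Transition n)} {p q : Fin n}
    (h : TWalk p l q) (f : Vec2 →+ ℤ) (W : ℕ) (hW : ∀ t ∈ l, f t.2.1 ≤ W)
    (hsum : (n * W : ℤ) < f (effect l)) :
    ∃ (r : Fin n) (c : List (Transition n)), TWalk r c r ∧ c ≠ [] ∧ c.length ≤ n ∧
      (∀ t ∈ c, t ∈ l) ∧ 0 < f (effect c) := by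
  have := EdgeWalk.exists_pos_closed h Finset.univ (by simp) (fun t => f t.2.1) W hW
    (by simpa [map_effect] using hsum)
  simpa only [map_effect, Finset.card_univ, Fintype.card_fin] using this

theorem TWalk.effect_le {n : ℕ} {π l : List (Transition n)} {p q : Fin n}
    (h : TWalk p l q) (hl : ∀ t ∈ l, t ∈ π) (f : Vec2 →+ ℤ) (hf : ∀ v ∈ shortEffects π, f v ≤ 0)
    (W : ℕ) (hW : ∀ t ∈ l, f t.2.1 ≤ W) : f (effect l) ≤ n * W := by
  by_contra! hlt
  obtain ⟨r, c, h1, h2, h3, h4, h5⟩ := h.exists_pos_closed f W hW hlt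
  exact absurd (hf _ ⟨r, c, h1, h2, h3, fun t ht => hl t (h4 t ht), rfl⟩) (by omega)

section Run

variable {n : ℕ} {V : VASS n} {π : List (Transition n)} {q : Fin n} {u : Vec2}

theorem IsRun.tWalk (h : IsRun V π q u) : TWalk q π (endState π q) :=
  TWalk.of_isPath h.1 h.2.1

theorem IsRun.coord_le (h : IsRun V π q u) {a b : Vec2 →+ ℤ} (hab : IsCoordPair a b)
    {t : Transition n} (ht : t ∈ π) : |a t.2.1| ≤ vassNorm V :=
  (hab.abs_le _).trans (by exact_mod_cast vnorm_le_vassNorm (h.1.1 t ht))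

theorem IsRun.coord_step (h : IsRun V π q u) {a b : Vec2 →+ ℤ} (hab : IsCoordPair a b)
    {i : ℕ} (hi : i < π.length) :
    |a (vecAt π u (i + 1)) - a (vecAt π u i)| ≤ vassNorm V := by
  rw [vecAt_succ u hi, map_add, add_sub_cancel_left]
  exact h.coord_le hab (List.getElem_mem hi)

theorem IsRun.coord_nonneg (h : IsRun V π q u) {a b : Vec2 →+ ℤ} (hab : IsCoordPair a b)
    {i : ℕ} (hi : i ≤ π.length) : 0 ≤ a (vecAt π u i) :=
  ((hab.nonneg_iff _).1 (h.2.2 i hi)).1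

theorem vecAt_zero : vecAt π u 0 = u := by simp [vecAt, effect]

/-- If no short cycle increases the second coordinate, then either a semi-positive cycle is
enabled or the first coordinate remains small. -/
theorem IsRun.enablesCycle_of_coord_nonpos (h : IsRun V π q u) {a b : Vec2 →+ ℤ}
    (hab : IsCoordPair a b) (hC : ∀ v ∈ shortEffects π, b v ≤ 0) {N : ℕ}
    (hN : N = n * vassNorm V)
    (hbig : a u + N * b u + (N + vassNorm V + N * N + n * (vassNorm V + N * vassNorm V)) <
      a (vecAt π u π.length)) :
    EnablesCycle V π q u n := by
  set M := vassNorm V with hM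
  have ha0 := h.coord_nonneg hab (Nat.zero_le _)
  have hb0 := h.coord_nonneg hab.symm (Nat.zero_le _)
  rw [vecAt_zero] at ha0 hb0
  obtain ⟨k, hk, hk1, hk2⟩ := exists_last_below (fun i => a (vecAt π u i)) M N π.length
    (fun i hi => by have := abs_le.1 (h.coord_step hab hi); linarith [this.2])
    (by
      have : (0 : ℤ) ≤ N * b u + (M + N * N + n * (M + N * M)) := by positivity
      linarith)
  simp only [vecAt_zero] at hk1
  have hk1' : a (vecAt π u k) ≤ a u + N + M := by
    refine hk1.trans (max_le ?_ ?_) <;> linarith [Int.natCast_nonneg N, Int.natCast_nonneg M]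
  obtain ⟨hw1, hw2⟩ := h.tWalk.take_drop k
  have hbk : b (vecAt π u k) ≤ b u + N := by
    have := hw1.effect_le (fun t ht => List.mem_of_mem_take ht) b hC M
      (fun t ht => (abs_le.1 (h.coord_le hab.symm (List.mem_of_mem_take ht))).2)
    rw [vecAt, map_add, hN]
    push_cast
    linarith
  have hend := vecAt_length π u k
  have hbend := h.coord_nonneg hab.symm le_rfl
  rw [hend, map_add] at hbend hbig
  obtain ⟨r, c, hc, hne, hlen, hcl, hpos⟩ := hw2.exists_pos_closed (a + (N : ℤ) • b) (M + N * M)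
    (fun t ht => by
      have h1 := (abs_le.1 (h.coord_le hab (List.mem_of_mem_drop ht))).2
      have h2 := (abs_le.1 (h.coord_le hab.symm (List.mem_of_mem_drop ht))).2
      simp
      gcongr)
    (by
      simp
      have : (N : ℤ) * b (effect (π.drop k)) ≥ N * (- (b u + N)) := by
        gcongr
        linarith
      linarith)
  have hcπ : ∀ t ∈ c, t ∈ π := fun t ht => List.mem_of_mem_drop (hcl t ht)
  have hcV : ∀ t ∈ c, t ∈ V := fun t ht => h.1.1 t (hcπ t ht)
  have hbc := hC _ ⟨r, c, hc, hne, hlen, hcπ, rfl⟩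
  have hac := (abs_le.1 (abs_effect_le_of_length_le hcV hab hlen)).2
  simp at hpos
  have hN' : (N : ℤ) = n * M := by exact_mod_cast hN
  have hb0c : b (effect c) = 0 := by
    by_contra hne0
    have : (N : ℤ) * b (effect c) ≤ N * (-1) := by
      gcongr
      omega
    linarith
  rw [hb0c] at hpos
  obtain ⟨r', d, hd, hperm, hdpos⟩ := hc.exists_rotation (fun t => b t.2.1)
    (by rw [← map_effect, hb0c])
  have hdne : d ≠ [] := by
    rintro rfl
    exact hne hperm.symm.eq_nil
  have hdeff : effect d = effect c := (hperm.map _).sum_eq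
  obtain ⟨e, d', rfl⟩ := List.exists_cons_of_ne_nil hdne
  obtain ⟨j, hj, hje⟩ := List.getElem_of_mem (hcl e (hperm.subset (by simp)))
  rw [List.getElem_drop] at hje
  simp at hj
  have hst := (h.tWalk.stateAt_getElem (k + j) (by omega)).1
  have her : e.1 = r' := hd.1
  rw [hje, her] at hst
  refine EnablesCycle.intro (i := k + j) (γ := e :: d') (by omega) (by rwa [hst])
    (fun t ht => hcV t (hperm.subset ht)) hab ?_ ?_ ?_ ?_ ?_
  · rw [← hM, ← hN']
    exact hk2 (k + j) (by omega) (by omega)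
  · intro i
    have h1 := hdpos i
    rw [← map_effect] at h1
    have h2 := h.coord_nonneg hab.symm (i := k + j) (by omega)
    omega
  · rw [hdeff]
    linarith
  · rw [hdeff, hb0c]
  · rw [hperm.length_eq]
    exact hlen

/-- If the first coordinate stays large and the second small, then either a semi-positive cycle is
enabled or the first coordinate does not grow much. -/
theorem IsRun.enablesCycle_of_coord_small (h : IsRun V π q u) {a b : Vec2 →+ ℤ}
    (hab : IsCoordPair a b) {B k : ℕ} (hk : k ≤ π.length)
    (hb : ∀ i, k ≤ i → i ≤ π.length → b (vecAt π u i) < B)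
    (ha : ∀ i, k ≤ i → i ≤ π.length → n * B * vassNorm V ≤ a (vecAt π u i))
    (hbig : a (vecAt π u k) + n * B * vassNorm V < a (vecAt π u π.length)) :
    EnablesCycle V π q u (n * B) := by
  set M := vassNorm V with hM
  set key : ℕ → Fin n × ℤ := fun i => (stateAt π q i, b (vecAt π u i)) with hkey
  set tr : ℕ → Transition n := fun i => π.getD i (q, 0, q) with htr
  have htr' : ∀ i (hi : i < π.length), tr i = π[i] := by
    intro i hi
    simp [htr, hi]
  have hvec : ∀ i, i < π.length → ∀ f : Vec2 →+ ℤ,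
      f (vecAt π u (i + 1)) = f (vecAt π u i) + f (tr i).2.1 := by
    intro i hi f
    rw [vecAt_succ u hi, map_add, htr' i hi]
  have hwalk : ∀ m j, EdgeWalk key (fun i => key (i + 1)) (key j) (List.range' j m)
      (key (j + m)) := by
    intro m
    induction m with
    | zero => intro j; simp [EdgeWalk]
    | succ m ih =>
      intro j
      refine ⟨rfl, ?_⟩
      have := ih (j + 1)
      rwa [show j + (m + 1) = j + 1 + m by omega]
  have hsum : ∀ m j, j + m ≤ π.length →
      ((List.range' j m).map (fun i => a (tr i).2.1)).sum =
        a (vecAt π u (j + m)) - a (vecAt π u j) := by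
    intro m
    induction m with
    | zero => intro j _; simp
    | succ m ih =>
      intro j hj
      rw [List.range'_succ, List.map_cons, List.sum_cons, ih (j + 1) (by omega),
        hvec j (by omega), show j + (m + 1) = j + 1 + m by omega]
      ring
  have hmem : ∀ i ∈ List.range' k (π.length - k), k ≤ i ∧ i < π.length := by
    intro i hi
    simp [List.mem_range'_1] at hi
    omega
  have hcard : ((Finset.univ : Finset (Fin n)) ×ˢ Finset.Ico (0 : ℤ) B).card = n * B := by
    simp
  obtain ⟨r, c, hc, hne, hlen, hcl, hpos⟩ := (hwalk (π.length - k) k).exists_pos_closed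
    ((Finset.univ : Finset (Fin n)) ×ˢ Finset.Ico (0 : ℤ) B)
    (fun i hi => by
      obtain ⟨h1, h2⟩ := hmem i hi
      simpa [hkey] using ⟨h.coord_nonneg hab.symm h2.le, hb i h1 h2.le⟩)
    (fun i => a (tr i).2.1) M
    (fun i hi => by
      obtain ⟨h1, h2⟩ := hmem i hi
      rw [htr' i h2]
      exact (abs_le.1 (h.coord_le hab (List.getElem_mem h2))).2)
    (by
      rw [hsum _ _ (by omega), hcard, Nat.add_sub_cancel' hk]
      push_cast
      linarith)
  rw [hcard] at hlen
  have hcb : ∀ i ∈ c, k ≤ i ∧ i < π.length := fun i hi => hmem i (hcl i hi)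
  have hcV : ∀ t ∈ c.map tr, t ∈ V := by
    intro t ht
    obtain ⟨i, hi, rfl⟩ := List.mem_map.1 ht
    rw [htr' i (hcb i hi).2]
    exact h.1.1 _ (List.getElem_mem _)
  have hcw : TWalk r.1 (c.map tr) r.1 := by
    refine hc.map tr Prod.fst (fun i hi => ?_) (fun i hi => ?_)
    · simp only [hkey]
      rw [htr' i (hcb i hi).2, (h.tWalk.stateAt_getElem i (hcb i hi).2).1]
    · simp only [hkey]
      rw [htr' i (hcb i hi).2, (h.tWalk.stateAt_getElem i (hcb i hi).2).2]
  have hbeff : ∀ (l : List ℕ) (p p' : Fin n × ℤ), (∀ i ∈ l, i < π.length) →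
      EdgeWalk key (fun i => key (i + 1)) p l p' → p.2 + b (effect (l.map tr)) = p'.2 := by
    intro l
    induction l with
    | nil => rintro p p' - rfl; simp [effect]
    | cons i l ih =>
      rintro p p' hl ⟨rfl, hw⟩
      rw [← ih _ _ (fun i hi => hl i (by simp [hi])) hw]
      simp only [hkey, hvec i (hl i (by simp)) b, map_effect, List.map_cons, List.sum_cons]
      ring
  have hbnonneg : ∀ (l : List ℕ) (p p' : Fin n × ℤ), (∀ i ∈ l, i < π.length) → 0 ≤ p.2 →
      EdgeWalk key (fun i => key (i + 1)) p l p' → 0 ≤ p'.2 := by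
    intro l
    induction l with
    | nil => rintro p p' - hp rfl; exact hp
    | cons i l ih =>
      rintro p p' hl hp ⟨rfl, hw⟩
      exact ih _ _ (fun i hi => hl i (by simp [hi]))
        (h.coord_nonneg hab.symm (hl i (by simp))) hw
  obtain ⟨i, c', rfl⟩ := List.exists_cons_of_ne_nil hne
  have hir : key i = r := hc.1
  have hi := hcb i (by simp)
  have hri : r.1 = stateAt π q i := by rw [← hir]
  have hbi : r.2 = b (vecAt π u i) := by rw [← hir]
  have hbi0 := h.coord_nonneg hab.symm hi.2.le
  refine EnablesCycle.intro hi.2.le (hri ▸ hcw) hcV hab ?_ ?_ ?_ ?_ ?_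
  · push_cast
    exact ha i hi.1 hi.2.le
  · intro j
    rw [← List.map_take, ← hbi]
    have h1 := hc
    rw [← List.take_append_drop j (i :: c'), EdgeWalk.append_iff] at h1
    obtain ⟨p, hp, -⟩ := h1
    have hlt : ∀ x ∈ (i :: c').take j, x < π.length :=
      fun x hx => (hcb x (List.mem_of_mem_take hx)).2
    rw [hbeff _ _ _ hlt hp]
    exact hbnonneg _ _ _ hlt (hbi ▸ hbi0) hp
  · rw [map_effect, List.map_map]
    exact hpos
  · have := hbeff _ _ _ (fun i hi => (hcb i hi).2) hc
    omega
  · simpa using hlen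

end Run

theorem Reach.exists_short {n : ℕ} {V : VASS n} {p q : Fin n} (h : Reach V p q) :
    ∃ l, TWalk p l q ∧ l.length ≤ n ∧ ∀ t ∈ l, t ∈ V := by
  obtain ⟨π, hπ, hs, rfl⟩ := h
  obtain ⟨l, h1, h2, h3⟩ := (TWalk.of_isPath hπ hs).exists_short Finset.univ (by simp)
  exact ⟨l, h1, by simpa using h2, fun t ht => hπ.1 t (h3 t ht)⟩

/-- Two short cycles in a strongly connected component whose effects admit a positive combination
yield a short cycle of positive effect through every state of the component. -/
theorem exists_pos_cycle {n : ℕ} {V : VASS n} {S : Set (Fin n)}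
    (hS : ∀ p ∈ S, ∀ q ∈ S, Reach V p q) {r₁ r₂ : Fin n} (hr₁ : r₁ ∈ S) (hr₂ : r₂ ∈ S)
    {c₁ c₂ : List (Transition n)} (hc₁ : TWalk r₁ c₁ r₁) (hc₂ : TWalk r₂ c₂ r₂)
    (hV₁ : ∀ t ∈ c₁, t ∈ V) (hV₂ : ∀ t ∈ c₂, t ∈ V) (hl₁ : c₁.length ≤ n) (hl₂ : c₂.length ≤ n)
    {N : ℕ} (hN : N = n * vassNorm V) {k₁ k₂ : ℕ} (hk₁ : k₁ ≤ 2 * N) (hk₂ : k₂ ≤ 2 * N)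
    (hpos : Pos (k₁ • effect c₁ + k₂ • effect c₂)) {s : Fin n} (hs : s ∈ S) :
    ∃ γ, TWalk s γ s ∧ (∀ t ∈ γ, t ∈ V) ∧ Pos (effect γ) ∧
      γ.length ≤ 3 * n + 2 * (2 * N * (3 * N + 1) * n) := by
  obtain ⟨d₁, hd₁, hdl₁, hdV₁⟩ := (hS s hs r₁ hr₁).exists_short
  obtain ⟨d₂, hd₂, hdl₂, hdV₂⟩ := (hS r₁ hr₁ r₂ hr₂).exists_short
  obtain ⟨d₃, hd₃, hdl₃, hdV₃⟩ := (hS r₂ hr₂ s hs).exists_short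
  set K := 3 * N + 1 with hK
  have hit : ∀ {c : List (Transition n)} {k : ℕ}, c.length ≤ n → k ≤ 2 * N →
      (List.replicate (k * K) c).flatten.length ≤ 2 * N * K * n := by
    intro c k hc hk
    simp only [List.length_flatten, List.map_replicate, List.sum_replicate, smul_eq_mul]
    gcongr
  refine ⟨d₁ ++ ((List.replicate (k₁ * K) c₁).flatten ++ (d₂ ++
    ((List.replicate (k₂ * K) c₂).flatten ++ d₃))),
    hd₁.append ((hc₁.iterate _).append (hd₂.append ((hc₂.iterate _).append hd₃))), ?_, ?_, ?_⟩
  · intro t ht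
    simp only [List.mem_append, List.mem_flatten, List.mem_replicate] at ht
    rcases ht with ht | ⟨l, ⟨-, rfl⟩, ht⟩ | ht | ⟨l, ⟨-, rfl⟩, ht⟩ | ht
    · exact hdV₁ t ht
    · exact hV₁ t ht
    · exact hdV₂ t ht
    · exact hV₂ t ht
    · exact hdV₃ t ht
  · have key : ∀ a b : Vec2 →+ ℤ, IsCoordPair a b →
        0 < a (k₁ • effect c₁ + k₂ • effect c₂) →
        0 < a (effect (d₁ ++ ((List.replicate (k₁ * K) c₁).flatten ++ (d₂ ++
          ((List.replicate (k₂ * K) c₂).flatten ++ d₃))))) := by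
      intro a b hab hp
      have h1 := (abs_le.1 (abs_effect_le_of_length_le hdV₁ hab hdl₁)).1
      have h2 := (abs_le.1 (abs_effect_le_of_length_le hdV₂ hab hdl₂)).1
      have h3 := (abs_le.1 (abs_effect_le_of_length_le hdV₃ hab hdl₃)).1
      have hN' : (N : ℤ) = n * vassNorm V := by exact_mod_cast hN
      rw [← hN'] at h1 h2 h3
      simp only [effect_append, effect_iterate, map_add, map_nsmul] at hp ⊢
      simp only [nsmul_eq_mul] at hp ⊢
      push_cast
      have h4 : (K : ℤ) * 1 ≤ K * (k₁ * a (effect c₁) + k₂ * a (effect c₂)) := by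
        gcongr
        exact hp
      have h5 : (K : ℤ) = 3 * N + 1 := by exact_mod_cast hK
      linarith
    exact ⟨key _ _ (Or.inl ⟨rfl, rfl⟩) hpos.1, key _ _ (Or.inr ⟨rfl, rfl⟩) hpos.2⟩
  · have h1 := hit hl₁ hk₁
    have h2 := hit hl₂ hk₂
    simp only [List.length_append]
    omega

section Run

variable {n : ℕ} {V : VASS n} {π : List (Transition n)} {q : Fin n} {u : Vec2}

/-- If every visited state lies on a short cycle of positive effect, then a run of large target
enables a semi-positive cycle. -/
theorem IsRun.enablesCycle_of_pos_cycles (h : IsRun V π q u) {L B : ℕ}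
    (hB : B = L * vassNorm V)
    (hcyc : ∀ i ≤ π.length, ∃ γ, TWalk (stateAt π q i) γ (stateAt π q i) ∧ (∀ t ∈ γ, t ∈ V) ∧
      Pos (effect γ) ∧ γ.length ≤ L)
    (hbig : vnorm u + 2 * (n * B * vassNorm V) + B + 2 * vassNorm V <
      vnorm (vecAt π u π.length)) :
    EnablesCycle V π q u (n * B + L) := by
  by_contra hno
  set M := vassNorm V with hM
  have hsmall : ∀ a b : Vec2 →+ ℤ, IsCoordPair a b → ∀ i ≤ π.length,
      (B : ℤ) ≤ a (vecAt π u i) → b (vecAt π u i) < B := by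
    intro a b hab i hi ha
    by_contra! hb
    obtain ⟨γ, h1, h2, h3, h4⟩ := hcyc i hi
    have hB' : (B : ℤ) = L * M := by exact_mod_cast hB
    have hpos : 0 < a (effect γ) ∧ 0 < b (effect γ) := by
      rcases hab with ⟨rfl, rfl⟩ | ⟨rfl, rfl⟩
      · exact h3
      · exact h3.symm
    refine hno ((EnablesCycle.intro hi h1 h2 hab (by rwa [← hM, ← hB']) (fun j => ?_) hpos.1
      hpos.2.le h4).mono (by omega))
    have h5 := (abs_le.1 (abs_effect_le_of_length_le (l := γ.take j)
      (fun t ht => h2 t (List.mem_of_mem_take ht)) hab.symm (k := L) (by simp; omega))).1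
    linarith
  set B' : ℤ := n * B * M + B + M with hB'
  have hstd : IsCoordPair (AddMonoidHom.fst ℤ ℤ) (AddMonoidHom.snd ℤ ℤ) := Or.inl ⟨rfl, rfl⟩
  have hnB : (0 : ℤ) ≤ n * B * M := by positivity
  have hbig' : (vnorm u : ℤ) + 2 * (n * B * M) + B + 2 * M < vnorm (vecAt π u π.length) := by
    exact_mod_cast hbig
  obtain ⟨k, hk, hk1, hk2⟩ := exists_last_below
    (fun i => max (vecAt π u i).1 (vecAt π u i).2) M B' π.length
    (fun i hi => by
      have h1 := (abs_le.1 (h.coord_step hstd hi)).2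
      have h2 := (abs_le.1 (h.coord_step hstd.symm hi)).2
      simp at h1 h2
      omega)
    (by
      have h1 := hstd.vnorm_eq (h.2.2 _ le_rfl)
      simp only [AddMonoidHom.coe_fst, AddMonoidHom.coe_snd] at h1
      omega)
  have h0 := hstd.vnorm_eq (h.2.2 0 (Nat.zero_le _))
  simp only [AddMonoidHom.coe_fst, AddMonoidHom.coe_snd] at h0
  rw [← h0, vecAt_zero] at hk1
  have main : ∀ a b : Vec2 →+ ℤ, IsCoordPair a b →
      (∀ v, max (a v) (b v) = max v.1 v.2) → B' ≤ a (vecAt π u k) → False := by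
    intro a b hab hmax hak
    have hinv : ∀ i, k ≤ i → i ≤ π.length → B' ≤ a (vecAt π u i) := by
      intro i hki
      induction i, hki using Nat.le_induction with
      | base => exact fun _ => hak
      | succ i hki ih =>
        intro hi
        have h1 := (abs_le.1 (h.coord_step hab (i := i) (by omega))).1
        have h2 := ih (by omega)
        have h3 := hsmall a b hab (i + 1) hi (by omega)
        have h4 := hk2 (i + 1) (by omega) hi
        simp only [← hmax] at h4
        omega
    have hinvb : ∀ i, k ≤ i → i ≤ π.length → b (vecAt π u i) < B := fun i h1 h2 =>
      hsmall a b hab i h2 (by have := hinv i h1 h2; omega)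
    refine hno ((h.enablesCycle_of_coord_small hab hk hinvb
      (fun i h1 h2 => by have := hinv i h1 h2; rw [← hM]; omega) ?_).mono (by omega))
    rw [← hM]
    have h1 := hab.vnorm_eq (h.2.2 _ le_rfl)
    have h2 := hinv _ hk le_rfl
    have h3 := hinvb _ hk le_rfl
    have h4 := hmax (vecAt π u k)
    omega
  rcases le_total (vecAt π u k).1 (vecAt π u k).2 with hle | hle
  · refine main _ _ hstd.symm (fun v => by simp [max_comm]) ?_
    have := hk2 k le_rfl hk
    simp only [max_eq_right hle] at this
    exact this
  · refine main _ _ hstd (fun v => by simp) ?_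
    have := hk2 k le_rfl hk
    simp only [max_eq_left hle] at this
    exact this

/-- If no short cycle increases the second coordinate, then a run of large target enables a
semi-positive cycle. -/
theorem IsRun.enablesCycle_of_coord_nonpos_of_lt (h : IsRun V π q u) {a b : Vec2 →+ ℤ}
    (hab : IsCoordPair a b) (hC : ∀ v ∈ shortEffects π, b v ≤ 0) {N : ℕ}
    (hN : N = n * vassNorm V) (hM : vassNorm V ≤ N)
    (hbig : (N + 1) * vnorm u + (2 * N * N + 3 * N) < vnorm (vecAt π u π.length)) :
    EnablesCycle V π q u n := by
  have ha := (abs_le.1 (hab.abs_le u)).2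
  have hb := (abs_le.1 (hab.symm.abs_le u)).2
  have hN' : (N : ℤ) = n * vassNorm V := by exact_mod_cast hN
  have hM' : (vassNorm V : ℤ) ≤ N := by exact_mod_cast hM
  have hbig' : ((N : ℤ) + 1) * vnorm u + (2 * N * N + 3 * N) < vnorm (vecAt π u π.length) := by
    exact_mod_cast hbig
  have hmul : (N : ℤ) * b u ≤ N * vnorm u := by gcongr
  have hn1 : (n : ℤ) * (vassNorm V + N * vassNorm V) = N + N * N := by rw [hN']; ring
  have hNu : (0 : ℤ) ≤ N * vnorm u := by positivity
  have hNN : (0 : ℤ) ≤ N * N := by positivity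
  refine h.enablesCycle_of_coord_nonpos hab hC hN ?_
  have hbend := h.tWalk.effect_le (fun t ht => ht) b hC (vassNorm V)
    (fun t ht => (abs_le.1 (h.coord_le hab.symm ht)).2)
  have h1 : b (vecAt π u π.length) = b u + b (effect π) := by simp [vecAt]
  rw [hab.vnorm_eq (h.2.2 _ le_rfl)] at hbig'
  rcases lt_max_iff.1 hbig' with h2 | h2 <;> linarith

/-- A run whose short cycles all decrease a functional with positive coefficients has a small
target. -/
theorem IsRun.vnorm_target_le (h : IsRun V π q u) {α β : ℤ} {N : ℕ} (hN : N = n * vassNorm V)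
    (hα : 0 < α) (hβ : 0 < β) (hαN : α ≤ N) (hβN : β ≤ N)
    (hC : ∀ v ∈ shortEffects π, α * v.1 + β * v.2 ≤ 0) :
    vnorm (vecAt π u π.length) ≤ 2 * N * vnorm u + 2 * N * N := by
  have hstd : IsCoordPair (AddMonoidHom.fst ℤ ℤ) (AddMonoidHom.snd ℤ ℤ) := Or.inl ⟨rfl, rfl⟩
  have hN' : (N : ℤ) = n * vassNorm V := by exact_mod_cast hN
  have hle := h.tWalk.effect_le (fun t ht => ht)
    (α • AddMonoidHom.fst ℤ ℤ + β • AddMonoidHom.snd ℤ ℤ) (by simpa using hC)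
    (2 * N * vassNorm V) (fun t ht => by
      have h1 := (abs_le.1 (h.coord_le hstd ht)).2
      have h2 := (abs_le.1 (h.coord_le hstd.symm ht)).2
      simp at h1 h2 ⊢
      have h3 : α * t.2.1.1 ≤ N * vassNorm V :=
        (mul_le_mul_of_nonneg_left h1 hα.le).trans (by gcongr)
      have h4 : β * t.2.1.2 ≤ N * vassNorm V :=
        (mul_le_mul_of_nonneg_left h2 hβ.le).trans (by gcongr)
      linarith)
  simp at hle
  have hx := (abs_le.1 (hstd.abs_le u)).2
  have hy := (abs_le.1 (hstd.symm.abs_le u)).2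
  have hx' := h.coord_nonneg hstd le_rfl
  have hy' := h.coord_nonneg hstd.symm le_rfl
  have hnorm := hstd.vnorm_eq (h.2.2 _ le_rfl)
  simp only [AddMonoidHom.coe_fst, AddMonoidHom.coe_snd] at hx hy hx' hy' hnorm
  have e1 : (vecAt π u π.length).1 = u.1 + (effect π).1 := by simp [vecAt]
  have e2 : (vecAt π u π.length).2 = u.2 + (effect π).2 := by simp [vecAt]
  have h1 : α * u.1 ≤ N * vnorm u := (mul_le_mul_of_nonneg_left hx hα.le).trans (by gcongr)
  have h2 : β * u.2 ≤ N * vnorm u := (mul_le_mul_of_nonneg_left hy hβ.le).trans (by gcongr)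
  have h3 : (n : ℤ) * (2 * N * vassNorm V) = 2 * N * N := by
    nth_rewrite 3 [hN']
    ring
  have h4 : α * (vecAt π u π.length).1 + β * (vecAt π u π.length).2 ≤
      2 * N * vnorm u + 2 * N * N := by
    rw [e1, e2]
    linarith
  have h5 : (vnorm (vecAt π u π.length) : ℤ) ≤ 2 * N * vnorm u + 2 * N * N := by
    rw [hnorm]
    refine max_le ?_ ?_ <;> nlinarith
  exact_mod_cast h5

end Run

theorem abs_le_of_mem_shortEffects {n : ℕ} {V : VASS n} {π : List (Transition n)}
    (hV : ∀ t ∈ π, t ∈ V) {v : Vec2} (hv : v ∈ shortEffects π) :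
    |v.1| ≤ n * vassNorm V ∧ |v.2| ≤ n * vassNorm V := by
  obtain ⟨r, c, -, -, hlen, hc, rfl⟩ := hv
  have hcV : ∀ t ∈ c, t ∈ V := fun t ht => hV t (hc t ht)
  exact ⟨abs_effect_le_of_length_le hcV (Or.inl ⟨rfl, rfl⟩) hlen,
    abs_effect_le_of_length_le hcV (Or.inr ⟨rfl, rfl⟩) hlen⟩

/-- A bounded set of planar integer vectors either lies in one of the half-planes `y ≤ 0`,
`x ≤ 0`, or in a half-plane `α x + β y ≤ 0` with small positive coefficients, or two of its
elements have a small positive combination. -/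
theorem halfPlane_or_pos_combination (C : Set Vec2) (N : ℕ)
    (hC : ∀ v ∈ C, |v.1| ≤ N ∧ |v.2| ≤ N) :
    (∀ v ∈ C, v.2 ≤ 0) ∨ (∀ v ∈ C, v.1 ≤ 0) ∨
    (∃ α β : ℤ, 0 < α ∧ 0 < β ∧ α ≤ N ∧ β ≤ N ∧ ∀ v ∈ C, α * v.1 + β * v.2 ≤ 0) ∨
    (∃ v ∈ C, ∃ w ∈ C, ∃ k l : ℕ, k ≤ 2 * N ∧ l ≤ 2 * N ∧ Pos (k • v + l • w)) := by
  by_contra! hcon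
  obtain ⟨⟨v, hv, hv2⟩, ⟨w, hw, hw1⟩, hfun, hcomb⟩ := hcon
  have hsgn : ∀ v ∈ C, ¬ (0 < v.1 ∧ 0 < v.2) := by
    rintro v hv ⟨h1, h2⟩
    have := abs_le.1 (hC v hv).1
    exact hcomb v hv v hv 1 0 (by omega) (by omega) ⟨by simpa using h1, by simpa using h2⟩
  have hcross : ∀ v ∈ C, ∀ w ∈ C, 0 < v.2 → 0 < w.1 → v.2 * w.1 - v.1 * w.2 ≤ 0 := by
    intro v hv w hw h1 h2
    by_contra! hpos
    have h3 := hsgn v hv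
    have h4 := hsgn w hw
    have b1 := hC v hv
    have b2 := hC w hw
    simp only [abs_le] at b1 b2
    refine hcomb v hv w hw (w.1 - w.2).toNat (v.2 - v.1).toNat (by omega) (by omega) ?_
    have e1 : (((w.1 - w.2).toNat : ℕ) : ℤ) = w.1 - w.2 := Int.toNat_of_nonneg (by omega)
    have e2 : (((v.2 - v.1).toNat : ℕ) : ℤ) = v.2 - v.1 := Int.toNat_of_nonneg (by omega)
    constructor
    · simp [e1, e2]
      nlinarith
    · simp [e1, e2]
      nlinarith
  have hneg : ∀ v ∈ C, 0 < v.2 → v.1 < 0 := by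
    intro v hv h1
    have h2 := hcross v hv w hw h1 hw1
    have h3 := hsgn v hv
    by_contra! h4
    have h5 : v.1 = 0 := by omega
    rw [h5] at h2
    nlinarith
  have hfin : {v ∈ C | 0 < v.2}.Finite := by
    refine (Set.finite_Icc (-(N : ℤ), -(N : ℤ)) ((N : ℤ), (N : ℤ))).subset ?_
    rintro v ⟨hv, -⟩
    have := hC v hv
    simp only [abs_le] at this
    exact ⟨⟨this.1.1, this.2.1⟩, ⟨this.1.2, this.2.2⟩⟩
  obtain ⟨m, ⟨hm, hm2⟩, hmax⟩ := Set.exists_max_image _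
    (fun v : Vec2 => (v.2 : ℚ) / (-v.1 : ℚ)) hfin ⟨v, hv, hv2⟩
  have hm1 := hneg m hm hm2
  have hb := hC m hm
  simp only [abs_le] at hb
  obtain ⟨z, hz, hzpos⟩ := hfun m.2 (-m.1) hm2 (by omega) (by omega) (by omega)
  by_cases h2 : 0 < z.2
  · have h1 := hneg z hz h2
    have := hmax z ⟨hz, h2⟩
    have q1 : (0 : ℚ) < -z.1 := by exact_mod_cast (by omega : 0 < -z.1)
    have q2 : (0 : ℚ) < -m.1 := by exact_mod_cast (by omega : 0 < -m.1)
    rw [div_le_div_iff₀ q1 q2] at this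
    have : z.2 * -m.1 ≤ m.2 * -z.1 := by exact_mod_cast this
    linarith
  · by_cases h1 : 0 < z.1
    · have := hcross m hm z hz hm2 h1
      linarith
    · nlinarith

/-- There is a polynomial `Q` with natural coefficients such
that every run of a 2-VASS `V` (with `n` states and norm `M`) staying within a
single SCC, whose target norm exceeds `Q(nM)·(source norm + 1)`, contains a
configuration enabling a semi-positive cycle of length at most `Q(nM)`. -/
theorem scc_semipositive_cycle :
    ∃ Qp : Polynomial ℕ,
      ∀ (n : ℕ) (V : VASS n) (π : List (Transition n)) (q : Fin n) (u : Vec2)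
        (S : Set (Fin n)),
        IsSCC V S → IsRun V π q u →
        (∀ i ≤ π.length, stateAt π q i ∈ S) →
        Qp.eval (n * vassNorm V) * (vnorm u + 1) < vnorm (vecAt π u π.length) →
        ∃ i ≤ π.length, ∃ γ : List (Transition n),
          IsCycle V γ ∧ Enabled γ (stateAt π q i) (vecAt π u i) ∧
          SemiPos (effect γ) ∧ γ.length ≤ Qp.eval (n * vassNorm V) := by
  refine ⟨Polynomial.C 40 * (Polynomial.X + 1) ^ 5, ?_⟩
  intro n V π q u S hS hrun hstates hbig
  change EnablesCycle V π q u _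
  obtain ⟨N, hN⟩ : ∃ N, N = n * vassNorm V := ⟨_, rfl⟩
  simp only [Polynomial.eval_mul, Polynomial.eval_C, Polynomial.eval_pow, Polynomial.eval_add,
    Polynomial.eval_X, Polynomial.eval_one] at hbig ⊢
  simp only [← hN] at hbig ⊢
  have hn : 0 < n := q.pos
  have hMN : vassNorm V ≤ N := hN ▸ Nat.le_mul_of_pos_left _ hn
  have hstd : IsCoordPair (AddMonoidHom.fst ℤ ℤ) (AddMonoidHom.snd ℤ ℤ) := Or.inl ⟨rfl, rfl⟩
  have hP : ∀ k ≤ 5, (N + 1) ^ k ≤ (N + 1) ^ 5 := fun k hk =>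
    Nat.pow_le_pow_right (by omega) hk
  have hM : 0 < vassNorm V := by
    by_contra hM0
    have h1 := abs_effect_le hrun.1.1 hstd
    have h2 := abs_effect_le hrun.1.1 hstd.symm
    have h3 : vassNorm V = 0 := by omega
    simp [h3] at h1 h2
    have h4 : vecAt π u π.length = u := by
      simp only [vecAt, List.take_length]
      rw [show effect π = 0 from Prod.ext h1 h2, add_zero]
    rw [h4] at hbig
    have := Nat.one_le_pow 5 (N + 1) (by omega)
    nlinarith
  have hnN : n ≤ N := hN ▸ Nat.le_mul_of_pos_right _ hM
  have hn_le : n ≤ 40 * (N + 1) ^ 5 := by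
    have := hP 1 (by omega)
    rw [pow_one] at this
    omega
  have hlin : (N + 1) * vnorm u + (2 * N * N + 3 * N) < vnorm (vecAt π u π.length) := by
    refine lt_of_le_of_lt ?_ hbig
    calc (N + 1) * vnorm u + (2 * N * N + 3 * N)
        ≤ (N + 1) ^ 1 * vnorm u + 3 * (N + 1) ^ 2 := by nlinarith
      _ ≤ (N + 1) ^ 5 * vnorm u + 3 * (N + 1) ^ 5 :=
        Nat.add_le_add (Nat.mul_le_mul_right _ (hP 1 (by omega)))
          (Nat.mul_le_mul_left _ (hP 2 (by omega)))
      _ ≤ 40 * (N + 1) ^ 5 * (vnorm u + 1) := by nlinarith [Nat.zero_le ((N + 1) ^ 5 * vnorm u)]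
  rcases halfPlane_or_pos_combination (shortEffects π) N (fun v hv => by
      have := abs_le_of_mem_shortEffects hrun.1.1 hv
      rw [hN]
      exact_mod_cast this) with h | h | ⟨α, β, h1, h2, h3, h4, h5⟩ |
      ⟨v, ⟨r₁, c₁, hc₁, hne₁, hl₁, hm₁, rfl⟩, w, ⟨r₂, c₂, hc₂, hne₂, hl₂, hm₂, rfl⟩,
        k, l, hk, hl, hpos⟩
  · exact (hrun.enablesCycle_of_coord_nonpos_of_lt hstd h hN hMN hlin).mono hn_le
  · exact (hrun.enablesCycle_of_coord_nonpos_of_lt hstd.symm h hN hMN hlin).mono hn_le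
  · exfalso
    refine absurd hbig (not_lt.2 ((hrun.vnorm_target_le hN h1 h2 h3 h4 h5).trans ?_))
    calc 2 * N * vnorm u + 2 * N * N
        ≤ 2 * (N + 1) ^ 1 * vnorm u + 2 * (N + 1) ^ 2 := by nlinarith
      _ ≤ 2 * (N + 1) ^ 5 * vnorm u + 2 * (N + 1) ^ 5 :=
        Nat.add_le_add (Nat.mul_le_mul_right _ (Nat.mul_le_mul_left _ (hP 1 (by omega))))
          (Nat.mul_le_mul_left _ (hP 2 (by omega)))
      _ ≤ 40 * (N + 1) ^ 5 * (vnorm u + 1) := by nlinarith [Nat.zero_le ((N + 1) ^ 5 * vnorm u)]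
  · have hmemS : ∀ {r : Fin n} {c : List (Transition n)}, TWalk r c r → c ≠ [] →
        (∀ t ∈ c, t ∈ π) → r ∈ S := by
      intro r c hc hne hm
      obtain ⟨e, c', rfl⟩ := List.exists_cons_of_ne_nil hne
      obtain ⟨i, hi, hie⟩ := List.getElem_of_mem (hm e (by simp))
      have h1 := (hrun.tWalk.stateAt_getElem i hi).1
      have h2 := hstates i hi.le
      rw [h1, hie] at h2
      exact hc.1 ▸ h2
    obtain ⟨L, hL⟩ : ∃ L, L = 3 * n + 2 * (2 * N * (3 * N + 1) * n) := ⟨_, rfl⟩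
    have hLP : L ≤ 12 * (N + 1) ^ 3 := by
      calc L ≤ 3 * N + 2 * (2 * N * (3 * N + 1) * N) := by rw [hL]; gcongr
        _ ≤ 12 * (N + 1) ^ 3 := by nlinarith [Nat.zero_le (N ^ 2), Nat.zero_le N]
    have hnLM : n * (L * vassNorm V) = N * L := by rw [hN]; ring
    have hNL : N * L ≤ 12 * (N + 1) ^ 4 := by
      calc N * L ≤ (N + 1) * (12 * (N + 1) ^ 3) := by gcongr; omega
        _ = 12 * (N + 1) ^ 4 := by ring
    have h3 := hP 3 (by omega)
    have h4 := hP 4 (by omega)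
    refine (hrun.enablesCycle_of_pos_cycles (L := L) rfl (fun i hi => ?_) ?_).mono ?_
    · rw [hL]
      exact exists_pos_cycle hS.2.1 (hmemS hc₁ hne₁ hm₁) (hmemS hc₂ hne₂ hm₂) hc₁ hc₂
        (fun t ht => hrun.1.1 t (hm₁ t ht)) (fun t ht => hrun.1.1 t (hm₂ t ht)) hl₁ hl₂ hN hk hl
        hpos (hstates i hi)
    · refine lt_of_le_of_lt ?_ hbig
      rw [hnLM]
      have h5 : N * L * vassNorm V ≤ 12 * (N + 1) ^ 5 := by
        calc N * L * vassNorm V ≤ 12 * (N + 1) ^ 4 * (N + 1) := by gcongr; omega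
          _ = 12 * (N + 1) ^ 5 := by ring
      have h6 : L * vassNorm V ≤ 12 * (N + 1) ^ 4 := by
        calc L * vassNorm V ≤ 12 * (N + 1) ^ 3 * (N + 1) := by gcongr; omega
          _ = 12 * (N + 1) ^ 4 := by ring
      have h7 := hP 1 (by omega)
      have h8 : 1 * vnorm u ≤ (N + 1) ^ 5 * vnorm u :=
        Nat.mul_le_mul_right _ (Nat.one_le_pow _ _ (by omega))
      rw [pow_one] at h7
      nlinarith
    · rw [hnLM]
      omega
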